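/- For every n ≥ 1, D_S(n) = min{2^e, 5^f}, where e = ⌈log_2 n⌉ and f = ⌈log_5(5n/4)⌉; equivalently, 2^e is the smallest power of 2 that is ≥ n and 5^f is the smallest power of 5 that is ≥ 5n/4. -/

import Mathlib

/-- The Salajan sequence: `u j = (3^j - 5*(-1)^j)/4`. -/
def salajanU (j : ℕ) : ℤ := ((3 : ℤ) ^ j - 5 * (-1) ^ j) / 4

/-- The Salajan discriminator. -/
noncomputable def salajanD (n : ℕ) : ℕ :=
  sInf {m : ℕ | 0 < m ∧ ∀ i j : ℕ, 1 ≤ i → i < j → j ≤ n →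
    ¬ (salajanU i ≡ salajanU j [ZMOD (m : ℤ)])}

/-!
If `m` is prime to `3`, then `u` is periodic modulo `m` with period the order `P` of `3` modulo
`4 * m`, so a discriminating `m` has `n ≤ P`; a factor `3 ^ b` of `m` only delays the onset of the
period by `b` terms and is never worth its size. The order `P` is always even, hence at least
halved by each coprime factorisation, and `m < 2 * n` forces `m` to be a prime power.

For a power of a prime `p ≥ 7`, a collision modulo `p` among the first `(p + 3) / 2` terms recurs
with period `p - 1` and overfills its residue class modulo `p`, so `p` itself would have to
discriminate `u 1, …, u ((p + 3) / 2)`. Then the order of `9` modulo `p` is at least `K ≈ p / 8`.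
A collision `u (2 * (k + 1)) ≡ u (2 * l + 1)` is a solution of `9 ^ (k + 1) - 3 * 9 ^ l = 10`;
splitting `k` and `l` into two summands below `K` turns it into an incidence between `K ^ 2` lines
and `K ^ 2` points of the plane, which exists by a second-moment count as soon as `K ^ 4 > p ^ 3`.
This settles `p > 4096`, and smaller primes are checked by computation. What remains are the
powers of `2`, where `P = 2 ^ e`, and of `5`, where `P = 4 * 5 ^ (f - 1)`.
-/

open Finset

/-! ### Incidences over finite fields -/

section Counting

lemma card_fiber_mul_card_of_surjective {G H : Type*} [AddGroup G] [Fintype G] [AddMonoid H]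
    [Fintype H] [DecidableEq H] {f : G →+ H} (hf : Function.Surjective f) (y : H) :
    #{x | f x = y} * Fintype.card H = Fintype.card G := by
  have hfiber : ∀ z ∈ (univ : Finset H), #{x | f x = z} = #{x | f x = y} := fun z _ =>
    AddMonoidHom.card_fiber_eq_of_mem_range f (hf z) (hf y)
  calc #{x | f x = y} * Fintype.card H
      = ∑ z : H, #{x | f x = z} := by rw [sum_const_nat hfiber, card_univ, mul_comm]
    _ = Fintype.card G := (card_eq_sum_card_fiberwise fun _ _ => mem_univ _).symm

variable {α β : Type*} [Fintype β] (r : α → β → Prop) [∀ a b, Decidable (r a b)]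
  {P : Finset α} {k l : ℕ}

lemma sum_sq_card_rel_le (hk : ∀ a ∈ P, #{b | r a b} = k)
    (hl : ∀ a ∈ P, ∀ a' ∈ P, a ≠ a' → #{b | r a b ∧ r a' b} ≤ l) :
    ∑ b, #{a ∈ P | r a b} ^ 2 ≤ #P * k + #P ^ 2 * l := by
  classical
  have hpair : ∀ a ∈ P, ∀ a' ∈ P, #{b | r a b ∧ r a' b} ≤ (if a = a' then k else 0) + l := by
    intro a ha a' ha'
    split_ifs with haa'
    · subst haa'
      simp only [and_self, hk a ha, Nat.le_add_right]
    · simpa only [zero_add] using hl a ha a' ha' haa'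
  calc ∑ b, #{a ∈ P | r a b} ^ 2
      = ∑ b, #{x ∈ P ×ˢ P | r x.1 b ∧ r x.2 b} := by
        refine sum_congr rfl fun b _ => ?_
        rw [sq, ← card_product, ← filter_product (r · b) (r · b)]
    _ = ∑ x ∈ P ×ˢ P, #{b | r x.1 b ∧ r x.2 b} := by
        simp only [card_filter]
        exact sum_comm
    _ ≤ ∑ x ∈ P ×ˢ P, ((if x.1 = x.2 then k else 0) + l) :=
        sum_le_sum fun x hx => hpair _ (mem_product.mp hx).1 _ (mem_product.mp hx).2
    _ = #P * k + #P ^ 2 * l := by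
        simp only [sum_add_distrib, sum_product, sum_ite_eq, sum_ite_mem, inter_self, sum_const,
          smul_eq_mul, card_product, sq]

-- The elements of `Qᶜ` carry all `#P * k` incidences; Cauchy-Schwarz bounds `#Qᶜ` from below.
lemma card_mul_card_mul_le_sq (hk : ∀ a ∈ P, #{b | r a b} = k)
    (hl : ∀ a ∈ P, ∀ a' ∈ P, a ≠ a' → #{b | r a b ∧ r a' b} ≤ l)
    (hkl : l * Fintype.card β ≤ k ^ 2) {Q : Finset β} (hPQ : ∀ a ∈ P, ∀ b ∈ Q, ¬ r a b) :
    #P * #Q * k ≤ Fintype.card β ^ 2 := by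
  classical
  have hincidences : ∑ b ∈ Qᶜ, #{a ∈ P | r a b} = #P * k := by
    have hQ : ∑ b ∈ Q, #{a ∈ P | r a b} = 0 := sum_eq_zero fun b hb =>
      card_eq_zero.mpr (filter_eq_empty_iff.mpr fun a ha => hPQ a ha b hb)
    rw [← sum_const_nat hk, ← zero_add (∑ b ∈ Qᶜ, _), ← hQ, sum_add_sum_compl]
    exact (sum_card_bipartiteAbove_eq_sum_card_bipartiteBelow r).symm
  have hcauchy : (#P * k) ^ 2 ≤ #Qᶜ * (#P * k + #P ^ 2 * l) := by
    calc (#P * k) ^ 2 = (∑ b ∈ Qᶜ, #{a ∈ P | r a b}) ^ 2 := by rw [hincidences]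
      _ ≤ #Qᶜ * ∑ b ∈ Qᶜ, #{a ∈ P | r a b} ^ 2 := sq_sum_le_card_mul_sum_sq
      _ ≤ #Qᶜ * ∑ b, #{a ∈ P | r a b} ^ 2 := by
          gcongr
          exact subset_univ _
      _ ≤ #Qᶜ * (#P * k + #P ^ 2 * l) := by
          gcongr
          exact sum_sq_card_rel_le r hk hl
  have hcard : #Q + #Qᶜ = Fintype.card β := card_add_card_compl Q
  rcases Nat.eq_zero_or_pos (#P * k) with h0 | hpos
  · simp only [mul_right_comm, h0, zero_mul, zero_le]
  · refine Nat.le_of_mul_le_mul_left ?_ hpos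
    have hle : #Qᶜ ≤ Fintype.card β := card_le_univ _
    have hscaled : (#P * k) ^ 2 * Fintype.card β ≤
        #Qᶜ * (#P * k * Fintype.card β + (#P * k) ^ 2) :=
      calc (#P * k) ^ 2 * Fintype.card β
          ≤ #Qᶜ * (#P * k + #P ^ 2 * l) * Fintype.card β := by gcongr
        _ = #Qᶜ * (#P * k * Fintype.card β + #P ^ 2 * (l * Fintype.card β)) := by ring
        _ ≤ #Qᶜ * (#P * k * Fintype.card β + #P ^ 2 * k ^ 2) := by gcongr
        _ = #Qᶜ * (#P * k * Fintype.card β + (#P * k) ^ 2) := by ring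
    nlinarith [Nat.mul_le_mul_left (#P * k * Fintype.card β) hle]

end Counting

section FiniteField

variable {F V : Type*} [Field F] [AddCommGroup V] [Module F V]

lemma surjective_prod_of_ne {φ ψ : Module.Dual F V} (hne : φ ≠ ψ) {v : V} (hv : φ v ≠ 0)
    (hφψ : φ v = ψ v) : Function.Surjective (φ.prod ψ) := by
  obtain ⟨w, hw⟩ : ∃ w, φ w ≠ ψ w := by
    contrapose! hne
    exact LinearMap.ext hne
  have hw' : φ w - ψ w ≠ 0 := sub_ne_zero.mpr hw
  rintro ⟨s, t⟩
  refine ⟨((s - t) / (φ w - ψ w)) • w +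
    ((s - (s - t) / (φ w - ψ w) * φ w) / φ v) • v, Prod.ext ?_ ?_⟩
  · change φ _ = s
    rw [map_add, map_smul, map_smul, smul_eq_mul, smul_eq_mul, div_mul_cancel₀ _ hv]
    ring
  · change ψ _ = t
    rw [map_add, map_smul, map_smul, smul_eq_mul, smul_eq_mul, ← hφψ, div_mul_cancel₀ _ hv]
    linear_combination -div_mul_cancel₀ (s - t) hw'

variable [Fintype F] [Fintype V]

open Classical in
lemma card_dual_eq_mul_card {φ : Module.Dual F V} (hφ : φ ≠ 0) (c : F) :
    #{v | φ v = c} * Fintype.card F = Fintype.card V :=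
  card_fiber_mul_card_of_surjective (f := φ.toAddMonoidHom) (LinearMap.surjective hφ) c

open Classical in
lemma card_dual_eq_and_eq_mul_sq_le {φ ψ : Module.Dual F V} (hne : φ ≠ ψ) {c : F} (hc : c ≠ 0) :
    #{v | φ v = c ∧ ψ v = c} * Fintype.card F ^ 2 ≤ Fintype.card V := by
  rcases eq_empty_or_nonempty ({v | φ v = c ∧ ψ v = c} : Finset V) with hempty | ⟨v, hv⟩
  · simp only [hempty, card_empty, zero_mul, zero_le]
  · obtain ⟨hφ, hψ⟩ := (mem_filter_univ v).mp hv
    have hsurj := surjective_prod_of_ne hne (hφ.trans_ne hc) (hφ.trans hψ.symm)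
    have := card_fiber_mul_card_of_surjective (f := (φ.prod ψ).toAddMonoidHom) hsurj (c, c)
    simpa [Prod.ext_iff, sq] using this.le

lemma card_mul_card_le_of_dual_ne {P : Finset (Module.Dual F V)} (hP : 0 ∉ P) {Q : Finset V}
    {c : F} (hc : c ≠ 0) (hPQ : ∀ φ ∈ P, ∀ v ∈ Q, φ v ≠ c) :
    #P * #Q ≤ Fintype.card F * Fintype.card V := by
  classical
  have hF : 0 < Fintype.card F := Fintype.card_pos
  rcases P.eq_empty_or_nonempty with rfl | ⟨φ₀, hφ₀⟩
  · simp only [card_empty, zero_mul, zero_le]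
  have hne : ∀ φ ∈ P, φ ≠ 0 := fun φ hφ h0 => hP (h0 ▸ hφ)
  set q := Fintype.card F
  set k := #{v | φ₀ v = c}
  have hk : k * q = Fintype.card V := card_dual_eq_mul_card (hne φ₀ hφ₀) c
  have hkpos : 0 < k := Nat.pos_of_mul_pos_right (hk ▸ Fintype.card_pos)
  have hlines : ∀ φ ∈ P, #{v | φ v = c} = k := fun φ hφ =>
    Nat.eq_of_mul_eq_mul_right hF ((card_dual_eq_mul_card (hne φ hφ) c).trans hk.symm)
  have hmeet : ∀ φ ∈ P, ∀ ψ ∈ P, φ ≠ ψ →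
      #{v | φ v = c ∧ ψ v = c} ≤ Fintype.card V / q ^ 2 := fun φ _ ψ _ hφψ =>
    (Nat.le_div_iff_mul_le (by positivity)).mpr (card_dual_eq_and_eq_mul_sq_le hφψ hc)
  have hkl : Fintype.card V / q ^ 2 * Fintype.card V ≤ k ^ 2 := by
    refine Nat.le_of_mul_le_mul_right ?_ (pow_pos hF 2)
    calc Fintype.card V / q ^ 2 * Fintype.card V * q ^ 2
        = Fintype.card V / q ^ 2 * q ^ 2 * Fintype.card V := by ring
      _ ≤ Fintype.card V * Fintype.card V := by gcongr; exact Nat.div_mul_le_self _ _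
      _ = k ^ 2 * q ^ 2 := by rw [← hk]; ring
  refine Nat.le_of_mul_le_mul_right ?_ hkpos
  calc #P * #Q * k ≤ Fintype.card V ^ 2 :=
        card_mul_card_mul_le_sq (fun (φ : Module.Dual F V) v => φ v = c) hlines hmeet hkl hPQ
    _ = q * Fintype.card V * k := by rw [sq]; nth_rw 1 [← hk]; ring

lemma exists_mul_add_mul_eq_of_card_lt {A B C D : Finset F} (hA : 0 ∉ A) {c : F} (hc : c ≠ 0)
    (hcard : Fintype.card F ^ 3 < #A * #B * (#C * #D)) :
    ∃ a ∈ A, ∃ b ∈ B, ∃ x ∈ C, ∃ y ∈ D, a * x + b * y = c := by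
  classical
  by_contra! hne
  let φ : F × F → Module.Dual F (F × F) := fun s =>
    s.1 • LinearMap.fst F F F + s.2 • LinearMap.snd F F F
  have hφ : ∀ s v, φ s v = s.1 * v.1 + s.2 * v.2 := fun _ _ => rfl
  have hinj : Function.Injective φ := fun s t hst => Prod.ext
    (by simpa [hφ] using DFunLike.congr_fun hst (1, 0))
    (by simpa [hφ] using DFunLike.congr_fun hst (0, 1))
  have hzero : 0 ∉ (A ×ˢ B).image φ := by
    intro h0
    obtain ⟨s, hs, hs0⟩ := mem_image.mp h0
    have : s.1 = 0 := by simpa [hφ] using DFunLike.congr_fun hs0 (1, 0)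
    exact hA (this ▸ (mem_product.mp hs).1)
  have havoid : ∀ ψ ∈ (A ×ˢ B).image φ, ∀ v ∈ C ×ˢ D, ψ v ≠ c := by
    simp only [forall_mem_image, mem_product, hφ]
    exact fun s hs v hv => hne _ hs.1 _ hs.2 _ hv.1 _ hv.2
  have hle := card_mul_card_le_of_dual_ne hzero hc havoid
  rw [card_image_of_injective _ hinj, card_product, card_product, Fintype.card_prod] at hle
  exact hcard.not_ge (hle.trans_eq (by ring))

lemma exists_mul_pow_add_mul_pow_eq {g a b c : F} {K : ℕ} (ha : a ≠ 0) (hb : b ≠ 0) (hc : c ≠ 0)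
    (hg : K ≤ orderOf g) (hK : Fintype.card F ^ 3 < K ^ 4) :
    ∃ k l, k + 2 ≤ 2 * K ∧ l + 2 ≤ 2 * K ∧ a * g ^ k + b * g ^ l = c := by
  classical
  have hg0 : g ≠ 0 := by
    rintro rfl
    obtain rfl : K = 0 := by simpa only [orderOf_zero, Nat.le_zero] using hg
    exact (Nat.zero_le _).not_gt hK
  have hinj : Set.InjOn (g ^ ·) (range K : Set ℕ) := by
    rw [coe_range]
    exact pow_injOn_Iio_orderOf.mono (Set.Iio_subset_Iio hg)
  have hcard : ∀ d : F, d ≠ 0 → #((range K).image (d * g ^ ·)) = K := fun d hd => by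
    rw [card_image_of_injOn, card_range]
    exact fun i hi j hj hij => hinj hi hj (mul_left_cancel₀ hd hij)
  have hzero : 0 ∉ (range K).image (1 * g ^ ·) := by
    simp only [mem_image, one_mul, pow_ne_zero _ hg0, and_false, exists_false, not_false_eq_true]
  obtain ⟨_, hx, _, hy, _, hx', _, hy', heq⟩ := exists_mul_add_mul_eq_of_card_lt hzero
    (B := (range K).image (1 * g ^ ·)) (C := (range K).image (a * g ^ ·))
    (D := (range K).image (b * g ^ ·)) hc
    (by rwa [hcard 1 one_ne_zero, hcard a ha, hcard b hb, ← sq, ← sq, ← pow_mul])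
  simp only [mem_image, mem_range] at hx hy hx' hy'
  obtain ⟨i, hi, rfl⟩ := hx
  obtain ⟨j, hj, rfl⟩ := hy
  obtain ⟨i', hi', rfl⟩ := hx'
  obtain ⟨j', hj', rfl⟩ := hy'
  exact ⟨i + i', j + j', by omega, by omega, by rw [← heq]; ring⟩

end FiniteField

/-! ### Discriminating moduli -/

/-- `Discriminates a m n` says that the modulus `m` separates `a 1, …, a n`; the discriminator of
`a` at `n` is the least such `m > 0`. -/
def Discriminates (a : ℕ → ℤ) (m n : ℕ) : Prop :=
  Set.InjOn (fun j => (a j : ZMod m)) (Set.Icc 1 n)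

namespace Discriminates

variable {a : ℕ → ℤ} {m n : ℕ}

lemma iff_forall_not_modEq : Discriminates a m n ↔
    ∀ i j : ℕ, 1 ≤ i → i < j → j ≤ n → ¬ a i ≡ a j [ZMOD (m : ℤ)] := by
  simp only [← ZMod.intCast_eq_intCast_iff]
  refine ⟨fun h i j hi hij hj heq =>
    hij.ne (h ⟨hi, hij.le.trans hj⟩ ⟨hi.trans hij.le, hj⟩ heq), fun h i hi j hj heq => ?_⟩
  rcases lt_trichotomy i j with hij | hij | hij
  · exact (h i j hi.1 hij hj.2 heq).elim
  · exact hij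
  · exact (h j i hj.1 hij hi.2 heq.symm).elim

lemma mono {n' : ℕ} (h : Discriminates a m n) (hn : n' ≤ n) : Discriminates a m n' :=
  Set.InjOn.mono (Set.Icc_subset_Icc_right hn) h

lemma lt_add_of_eq {i P : ℕ} (h : Discriminates a m n) (hi : 1 ≤ i) (hP : 0 < P)
    (heq : (a (i + P) : ZMod m) = a i) : n < i + P := by
  by_contra! hle
  have : i + P = i := h ⟨by omega, hle⟩ ⟨hi, by omega⟩ heq
  omega

lemma card_filter_le {k : ℕ} (h : Discriminates a (m * k) n) (hmk : 0 < m * k) (c : ZMod m) :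
    #{i ∈ Icc 1 n | (a i : ZMod m) = c} ≤ k := by
  have hm : 0 < m := Nat.pos_of_mul_pos_right hmk
  have : NeZero m := ⟨hm.ne'⟩
  have : NeZero (m * k) := ⟨hmk.ne'⟩
  let π := ZMod.castHom (dvd_mul_right m k) (ZMod m)
  have hfiber : #{x | π x = c} * m = m * k := by
    have := card_fiber_mul_card_of_surjective (f := π.toAddMonoidHom)
      (ZMod.castHom_surjective (dvd_mul_right m k)) c
    rwa [ZMod.card, ZMod.card] at this
  have hmaps : ∀ i ∈ Icc 1 n, (a i : ZMod m) = c → π (a i) = c := fun i _ hi => by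
    rw [map_intCast, hi]
  calc #{i ∈ Icc 1 n | (a i : ZMod m) = c}
      ≤ #{x | π x = c} := by
        refine card_le_card_of_injOn (fun i => (a i : ZMod (m * k))) (fun i hi => ?_)
          (Set.InjOn.mono (fun i hi => ?_) h)
        · obtain ⟨hin, hic⟩ := mem_filter.mp (mem_coe.mp hi)
          exact mem_coe.mpr ((mem_filter_univ _).mpr (hmaps i hin hic))
        · exact mem_Icc.mp (mem_filter.mp (mem_coe.mp hi)).1
    _ = k := Nat.eq_of_mul_eq_mul_left hm (by rw [mul_comm, hfiber])

lemma le (h : Discriminates a m n) (hm : 0 < m) : n ≤ m := by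
  have := card_filter_le (m := 1) (by rwa [one_mul]) (by rwa [one_mul]) 0
  simpa only [Subsingleton.elim _ (0 : ZMod 1), filter_true, Nat.card_Icc, Nat.add_sub_cancel]
    using this

-- The collision recurs in every period, and so fills a residue class with `2 * (s + 1)` terms.
lemma two_mul_le_of_periodic {k d s i j : ℕ} (h : Discriminates a (m * k) n) (hmk : 0 < m * k)
    (hper : Function.Periodic (fun i => (a i : ZMod m)) d) (heq : (a i : ZMod m) = a j)
    (hi : 1 ≤ i) (hij : i < j) (hjd : j < i + d) (hn : j + s * d ≤ n) : 2 * (s + 1) ≤ k := by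
  let translates (r : ℕ) : Finset ℕ := (range (s + 1)).image fun t => r + t * d
  have hcard : ∀ r, #(translates r) = s + 1 := fun r => by
    rw [card_image_of_injective, card_range]
    exact (add_right_injective r).comp (mul_left_injective₀ (by omega))
  have hdisj : Disjoint (translates i) (translates j) := by
    simp only [translates, disjoint_left, mem_image, not_exists, not_and]
    rintro _ ⟨t, -, rfl⟩ t' - htt'
    have hmod : i ≡ j [MOD d] := by
      simpa only [Nat.ModEq, Nat.add_mul_mod_self_right] using congrArg (· % d) htt'.symm
    have := Nat.le_of_dvd (by omega) ((Nat.modEq_iff_dvd' hij.le).mp hmod)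
    omega
  have hsub : ∀ r, 1 ≤ r → r ≤ j → (a r : ZMod m) = a i →
      translates r ⊆ {l ∈ Icc 1 n | (a l : ZMod m) = a i} := by
    intro r hr hrj hri
    simp only [translates, image_subset_iff, mem_range, mem_filter, mem_Icc]
    intro t ht
    have : t * d ≤ s * d := by
      gcongr
      omega
    exact ⟨by omega, (hper.nsmul t r).trans hri⟩
  calc 2 * (s + 1) = #(translates i ∪ translates j) := by
        rw [card_union_of_disjoint hdisj, hcard, hcard, two_mul]
    _ ≤ #{l ∈ Icc 1 n | (a l : ZMod m) = a i} :=
        card_le_card (union_subset (hsub i hi hij.le rfl) (hsub j (by omega) le_rfl heq.symm))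
    _ ≤ k := h.card_filter_le hmk _

end Discriminates

/-! ### The Salajan sequence and its periods -/

lemma four_mul_salajanU (j : ℕ) : 4 * salajanU j = 3 ^ j - 5 * (-1) ^ j := by
  have h4 : (4 : ℤ) ∣ 3 ^ j - (-1) ^ j := by simpa using sub_dvd_pow_sub_pow (3 : ℤ) (-1) j
  refine Int.mul_ediv_cancel' ?_
  rw [show (3 : ℤ) ^ j - 5 * (-1) ^ j = 3 ^ j - (-1) ^ j - 4 * (-1) ^ j by ring]
  exact h4.sub (dvd_mul_right _ _)

lemma salajanU_add_one (j : ℕ) : salajanU (j + 1) = 3 ^ j - salajanU j := by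
  have h := four_mul_salajanU j
  have h' := four_mul_salajanU (j + 1)
  rw [pow_succ, pow_succ] at h'
  linarith

lemma four_mul_salajanU_add_sub {P : ℕ} (hP : Even P) (i : ℕ) :
    4 * (salajanU (i + P) - salajanU i) = 3 ^ i * (3 ^ P - 1) := by
  rw [mul_sub, four_mul_salajanU, four_mul_salajanU, pow_add (-1 : ℤ), hP.neg_one_pow]
  ring

lemma intCast_salajanU_two (j : ℕ) : (salajanU j : ZMod 2) = j + 1 := by
  induction j with
  | zero => decide
  | succ j ih =>
    rw [salajanU_add_one, Int.cast_sub, ih, Nat.cast_succ]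
    push_cast
    rw [show (3 : ZMod 2) = 1 from rfl, one_pow, CharTwo.sub_eq_add]
    ring

lemma intCast_salajanU_eq_iff {m : ℕ} (hm : Odd m) {i j : ℕ} :
    (salajanU i : ZMod m) = salajanU j ↔
      (3 : ZMod m) ^ i - 5 * (-1) ^ i = 3 ^ j - 5 * (-1) ^ j := by
  have h4 : IsUnit (4 : ZMod m) := by
    exact_mod_cast (ZMod.isUnit_iff_coprime 4 m).mpr
      (Nat.Coprime.pow_left 2 (Nat.coprime_two_left.mpr hm))
  have hcast : ∀ l, (4 : ZMod m) * salajanU l = 3 ^ l - 5 * (-1) ^ l := fun l => by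
    exact_mod_cast congrArg (Int.cast : ℤ → ZMod m) (four_mul_salajanU l)
  rw [← hcast, ← hcast, h4.mul_right_inj]

lemma four_mul_salajanU_modEq_five (j : ℕ) : (4 * salajanU j : ZMod 5) = 3 ^ j := by
  have := congrArg (Int.cast : ℤ → ZMod 5) (four_mul_salajanU j)
  push_cast at this
  rw [this, show (5 : ZMod 5) = 0 from rfl, zero_mul, sub_zero]

/-- The least even `P` with `u (i + P) ≡ u i` modulo `m` for all `i`, for `m` prime to `3`
(see `salajanPeriod_dvd_iff` and `four_mul_salajanU_add_sub`). The factor `4` comes from the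
denominator of `u`, and it forces the order to be even. -/
noncomputable def salajanPeriod (m : ℕ) : ℕ := orderOf (3 : ZMod (4 * m))

lemma salajanPeriod_dvd_iff {m P : ℕ} : salajanPeriod m ∣ P ↔ (4 * m : ℤ) ∣ 3 ^ P - 1 := by
  have hcast : ((3 ^ P - 1 : ℤ) : ZMod (4 * m)) = 3 ^ P - 1 := by push_cast; rfl
  rw [salajanPeriod, orderOf_dvd_iff_pow_eq_one, ← sub_eq_zero, ← hcast,
    ZMod.intCast_zmod_eq_zero_iff_dvd]
  push_cast
  rfl

lemma orderOf_three_dvd_salajanPeriod {d m : ℕ} (hd : d ∣ 4 * m) :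
    orderOf (3 : ZMod d) ∣ salajanPeriod m := by
  have := orderOf_map_dvd (ZMod.castHom hd (ZMod d) : ZMod (4 * m) →* ZMod d) 3
  rwa [MonoidHom.coe_coe, map_ofNat] at this

lemma even_salajanPeriod (m : ℕ) : Even (salajanPeriod m) := by
  have h4 : orderOf (3 : ZMod 4) = 2 := orderOf_eq_prime (by decide) (by decide)
  exact even_iff_two_dvd.mpr (h4 ▸ orderOf_three_dvd_salajanPeriod (dvd_mul_right 4 m))

lemma salajanPeriod_pos {m : ℕ} (hm : 0 < m) (h3 : Nat.Coprime 3 m) : 0 < salajanPeriod m := by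
  have : NeZero (4 * m) := ⟨by omega⟩
  have hunit : IsUnit (3 : ZMod (4 * m)) := by
    exact_mod_cast (ZMod.isUnit_iff_coprime 3 (4 * m)).mpr (Nat.Coprime.mul_right (by norm_num) h3)
  exact hunit.isOfFinOrder.orderOf_pos

lemma salajanU_add_eq_of_dvd {q P b i : ℕ} (hP : salajanPeriod q ∣ P) (hb : b ≤ i) :
    (salajanU (i + P) : ZMod (3 ^ b * q)) = salajanU i := by
  have hdvd : (4 * (3 ^ b * q) : ℤ) ∣ 4 * (salajanU (i + P) - salajanU i) := by
    rw [four_mul_salajanU_add_sub ((even_salajanPeriod q).trans_dvd hP), mul_left_comm]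
    exact mul_dvd_mul (pow_dvd_pow 3 hb) (salajanPeriod_dvd_iff.mp hP)
  refine ((ZMod.intCast_eq_intCast_iff_dvd_sub _ _ _).mpr ?_).symm
  exact_mod_cast (mul_dvd_mul_iff_left four_ne_zero).mp hdvd

lemma periodic_salajanU {m P : ℕ} (hP : salajanPeriod m ∣ P) :
    Function.Periodic (fun i => (salajanU i : ZMod m)) P := fun i => by
  have := salajanU_add_eq_of_dvd hP (Nat.zero_le i)
  rwa [pow_zero, one_mul] at this

lemma salajanPeriod_dvd_of_eq {m i P : ℕ} (h3 : Nat.Coprime 3 m) (hP : Even P)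
    (h : (salajanU (i + P) : ZMod m) = salajanU i) : salajanPeriod m ∣ P := by
  have hdvd : (4 * m : ℤ) ∣ 3 ^ i * (3 ^ P - 1) := by
    rw [← four_mul_salajanU_add_sub hP]
    exact mul_dvd_mul_left 4 ((ZMod.intCast_eq_intCast_iff_dvd_sub _ _ _).mp h.symm)
  have hcop : IsCoprime (4 * m : ℤ) (3 ^ i) := by
    exact_mod_cast (((by norm_num : Nat.Coprime 3 4).mul_right h3).pow_left i).symm.isCoprime
  exact salajanPeriod_dvd_iff.mpr (hcop.dvd_of_dvd_mul_left hdvd)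

lemma Discriminates.le_salajanPeriod {m n : ℕ} (h : Discriminates salajanU m n) (hm : 0 < m)
    (h3 : Nat.Coprime 3 m) : n ≤ salajanPeriod m :=
  Nat.lt_one_add_iff.mp
    (h.lt_add_of_eq le_rfl (salajanPeriod_pos hm h3) (periodic_salajanU dvd_rfl 1))

lemma discriminates_salajanPeriod {m : ℕ} (h3 : Nat.Coprime 3 m)
    (hpar : ∀ i j, (salajanU i : ZMod m) = salajanU j → i ≡ j [MOD 2]) :
    Discriminates salajanU m (salajanPeriod m) := by
  refine Discriminates.iff_forall_not_modEq.mpr fun i j hi hij hj h => ?_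
  rw [← ZMod.intCast_eq_intCast_iff] at h
  obtain ⟨P, rfl⟩ := Nat.exists_eq_add_of_lt hij
  have hP : Even (P + 1) := by
    have := (Nat.modEq_iff_dvd' hij.le).mp (hpar _ _ h)
    rwa [add_assoc, Nat.add_sub_cancel_left, ← even_iff_two_dvd] at this
  have := Nat.le_of_dvd P.succ_pos (salajanPeriod_dvd_of_eq h3 hP h.symm)
  omega

lemma salajanPeriod_dvd_of_odd {m P : ℕ} (hm : Odd m) (hP : Even P) (h : (3 : ZMod m) ^ P = 1) :
    salajanPeriod m ∣ P := by
  refine salajanPeriod_dvd_iff.mpr (IsCoprime.mul_dvd ?_ ?_ ?_)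
  · exact_mod_cast ((Nat.coprime_two_left.mpr hm).pow_left 2).isCoprime
  · obtain ⟨t, rfl⟩ := hP
    rw [← two_mul, pow_mul]
    exact dvd_trans (by norm_num) (sub_one_dvd_pow_sub_one ((3 : ℤ) ^ 2) t)
  · rw [← ZMod.intCast_zmod_eq_zero_iff_dvd]
    push_cast
    rw [h, sub_self]

lemma salajanPeriod_dvd_totient {m : ℕ} (hm : Odd m) (hm2 : 2 < m) (h3 : Nat.Coprime 3 m) :
    salajanPeriod m ∣ m.totient := by
  refine salajanPeriod_dvd_of_odd hm (Nat.totient_even hm2) ?_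
  have := congrArg Units.val (ZMod.pow_totient (ZMod.unitOfCoprime 3 h3))
  rw [Units.val_pow_eq_pow_val, ZMod.coe_unitOfCoprime, Units.val_one] at this
  exact_mod_cast this

lemma salajanPeriod_two_pow {e : ℕ} (he : e ≠ 0) : salajanPeriod (2 ^ e) = 2 ^ e := by
  have hperiod : salajanPeriod (2 ^ e) = orderOf (3 : ZMod (2 ^ (e + 2))) := by
    rw [salajanPeriod, pow_add, mul_comm]
  have hneg : orderOf (-3 : ZMod (2 ^ (e + 2))) = 2 ^ e := by
    rw [← ZMod.orderOf_one_add_four_mul (-1) (by decide) e]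
    congr 1
    push_cast
    ring
  have hpow : ∀ {P : ℕ}, Even P → ((3 : ZMod (2 ^ (e + 2))) ^ P = 1 ↔ 2 ^ e ∣ P) := fun hP => by
    rw [← hP.neg_pow, ← hneg, orderOf_dvd_iff_pow_eq_one]
  have heven : Even (2 ^ e) := (Nat.even_pow' he).mpr even_two
  refine Nat.dvd_antisymm ?_ ((hpow (even_salajanPeriod _)).mp ?_)
  · rw [hperiod]
    exact orderOf_dvd_of_pow_eq_one ((hpow heven).mpr dvd_rfl)
  · rw [hperiod, pow_orderOf_eq_one]

lemma orderOf_three_zmod_five : orderOf (3 : ZMod 5) = 4 :=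
  orderOf_eq_prime_pow (p := 2) (n := 1) (by decide) (by decide)

lemma salajanPeriod_five_pow (f : ℕ) : salajanPeriod (5 ^ (f + 1)) = 4 * 5 ^ f := by
  refine Nat.dvd_antisymm ?_ (Nat.Coprime.mul_dvd_of_dvd_of_dvd ?_ ?_ ?_)
  · have h5 : 2 < 5 ^ (f + 1) := lt_of_lt_of_le (by norm_num) (Nat.le_self_pow f.succ_ne_zero 5)
    rw [mul_comm, ← Nat.totient_prime_pow_succ Nat.prime_five]
    exact salajanPeriod_dvd_totient (Odd.pow (by decide)) h5 (Nat.Coprime.pow_right _ (by norm_num))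
  · exact Nat.Coprime.pow_right f (by norm_num)
  · rw [← orderOf_three_zmod_five]
    exact orderOf_three_dvd_salajanPeriod ((dvd_pow_self 5 f.succ_ne_zero).mul_left 4)
  · have h81 : orderOf ((3 : ZMod (5 ^ (f + 1))) ^ 4) = 5 ^ f := by
      rw [← ZMod.orderOf_one_add_mul_prime Nat.prime_five (by norm_num) 16 (by norm_num) f]
      congr 1
      norm_num
    rw [← h81]
    exact (orderOf_pow_dvd 4).trans (orderOf_three_dvd_salajanPeriod (dvd_mul_left _ 4))

lemma salajanPeriod_mul_dvd_lcm {a b : ℕ} (hab : a.Coprime b) :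
    salajanPeriod (a * b) ∣ (salajanPeriod a).lcm (salajanPeriod b) := by
  have ha := salajanPeriod_dvd_iff.mp (Nat.dvd_lcm_left (salajanPeriod a) (salajanPeriod b))
  have hb := salajanPeriod_dvd_iff.mp (Nat.dvd_lcm_right (salajanPeriod a) (salajanPeriod b))
  rw [salajanPeriod_dvd_iff]
  obtain ⟨c, hc⟩ := (dvd_mul_right _ _).trans ha
  rw [hc, mul_dvd_mul_iff_left four_ne_zero] at ha hb ⊢
  exact_mod_cast hab.isCoprime.mul_dvd ha hb

lemma two_mul_salajanPeriod_mul_le {a b : ℕ} (ha : 0 < a) (hb : 0 < b) (hab : a.Coprime b)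
    (h3 : Nat.Coprime 3 (a * b)) :
    2 * salajanPeriod (a * b) ≤ salajanPeriod a * salajanPeriod b := by
  have hapos := salajanPeriod_pos ha h3.coprime_mul_right_right
  have hbpos := salajanPeriod_pos hb h3.coprime_mul_left_right
  rw [← Nat.gcd_mul_lcm (salajanPeriod a)]
  refine Nat.mul_le_mul (Nat.le_of_dvd (Nat.gcd_pos_of_pos_left _ hapos) ?_)
    (Nat.le_of_dvd (Nat.lcm_pos hapos hbpos) (salajanPeriod_mul_dvd_lcm hab))
  exact Nat.dvd_gcd (even_salajanPeriod a).two_dvd (even_salajanPeriod b).two_dvd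

lemma salajanPeriod_le {m : ℕ} (hm : 1 < m) (h3 : Nat.Coprime 3 m) : salajanPeriod m ≤ m := by
  induction m using Nat.recOnPosPrimePosCoprime with
  | zero => omega
  | one => omega
  | prime_pow p k hp hk =>
    rcases hp.eq_two_or_odd' with rfl | hodd
    · exact (salajanPeriod_two_pow hk.ne').le
    · have hodd : Odd (p ^ k) := hodd.pow
      have hne : p ^ k ≠ 2 := fun h => by
        rw [h] at hodd
        exact absurd hodd (by decide)
      exact (Nat.le_of_dvd (Nat.totient_pos.mpr (by omega))
        (salajanPeriod_dvd_totient hodd (by omega) h3)).trans (Nat.totient_le _)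
  | coprime a b ha hb hab iha ihb =>
    have h2 := two_mul_salajanPeriod_mul_le (by omega) (by omega) hab h3
    have := Nat.mul_le_mul (iha ha h3.coprime_mul_right_right) (ihb hb h3.coprime_mul_left_right)
    omega

lemma two_mul_salajanPeriod_le_of_not_isPrimePow {m : ℕ} (hm : 1 < m) (h3 : Nat.Coprime 3 m)
    (hpp : ¬ IsPrimePow m) : 2 * salajanPeriod m ≤ m := by
  induction m using Nat.recOnPosPrimePosCoprime with
  | zero => omega
  | one => omega
  | prime_pow p k hp hk => exact (hpp (hp.isPrimePow.pow hk.ne')).elim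
  | coprime a b ha hb hab _ _ =>
    exact (two_mul_salajanPeriod_mul_le (by omega) (by omega) hab h3).trans (Nat.mul_le_mul
      (salajanPeriod_le ha h3.coprime_mul_right_right)
      (salajanPeriod_le hb h3.coprime_mul_left_right))

lemma intCast_zmod_eq_of_dvd {d m : ℕ} (hd : d ∣ m) {x y : ℤ} (h : (x : ZMod m) = y) :
    (x : ZMod d) = y := by
  simpa only [map_intCast] using congrArg (ZMod.castHom hd (ZMod d)) h

/-! ### Powers of two and of five -/

lemma discriminates_two_pow (e : ℕ) : Discriminates salajanU (2 ^ e) (2 ^ e) := by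
  rcases eq_or_ne e 0 with rfl | he
  · rw [pow_zero, Discriminates, Set.Icc_self]
    exact Set.injOn_singleton _ _
  · have hpar := discriminates_salajanPeriod (m := 2 ^ e) (Nat.Coprime.pow_right e (by norm_num))
      fun i j h => by
        have h2 := intCast_zmod_eq_of_dvd (dvd_pow_self 2 he) h
        rw [intCast_salajanU_two, intCast_salajanU_two, add_left_inj] at h2
        exact (ZMod.natCast_eq_natCast_iff _ _ _).mp h2
    rwa [salajanPeriod_two_pow he] at hpar

lemma modEq_two_of_three_pow_eq {i j : ℕ} (h : (3 : ZMod 5) ^ i = 3 ^ j) : i ≡ j [MOD 2] := by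
  have hneg : (-1 : ZMod 5) ^ (i % 2) = (-1) ^ (j % 2) := by
    rw [← neg_one_pow_eq_pow_mod_two, ← neg_one_pow_eq_pow_mod_two,
      show (-1 : ZMod 5) = 3 ^ 2 from rfl, pow_right_comm, h, pow_right_comm]
  have hdecide : ∀ a < 2, ∀ b < 2, (-1 : ZMod 5) ^ a = (-1) ^ b → a = b := by decide
  exact hdecide _ (Nat.mod_lt _ two_pos) _ (Nat.mod_lt _ two_pos) hneg

lemma discriminates_five_pow_iff {f n : ℕ} :
    Discriminates salajanU (5 ^ (f + 1)) n ↔ n ≤ 4 * 5 ^ f := by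
  have h3 : Nat.Coprime 3 (5 ^ (f + 1)) := Nat.Coprime.pow_right _ (by norm_num)
  rw [← salajanPeriod_five_pow]
  refine ⟨fun h => h.le_salajanPeriod (by positivity) h3, fun h => ?_⟩
  refine (discriminates_salajanPeriod h3 fun i j hij => modEq_two_of_three_pow_eq ?_).mono h
  rw [← four_mul_salajanU_modEq_five, ← four_mul_salajanU_modEq_five,
    intCast_zmod_eq_of_dvd (dvd_pow_self 5 f.succ_ne_zero) hij]

/-! ### Reduction to primes -/

lemma salajanPeriod_le_add_one {m : ℕ} (hm : 0 < m) (h3 : Nat.Coprime 3 m) :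
    salajanPeriod m ≤ m + 1 := by
  rcases (Nat.succ_le_of_lt hm).eq_or_lt with rfl | hm1
  · exact Nat.le_of_dvd two_pos (salajanPeriod_dvd_iff.mpr (by norm_num))
  · exact (salajanPeriod_le hm1 h3).trans m.le_succ

lemma coprime_three_of_discriminates {m n : ℕ} (hm : 0 < m) (hn : m + 3 ≤ 2 * n)
    (h : Discriminates salajanU m n) : Nat.Coprime 3 m := by
  obtain ⟨b, q, hq, rfl⟩ := Nat.exists_eq_pow_mul_and_not_dvd hm.ne' 3 (by norm_num)
  have hq0 : 0 < q := Nat.pos_of_mul_pos_left hm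
  have hq3 : Nat.Coprime 3 q := (Nat.Prime.coprime_iff_not_dvd Nat.prime_three).mpr hq
  rcases Nat.eq_zero_or_pos b with rfl | hb
  · simpa only [pow_zero, one_mul] using hq3
  · have hlt := h.lt_add_of_eq hb (salajanPeriod_pos hq0 hq3)
      (salajanU_add_eq_of_dvd dvd_rfl le_rfl)
    have hle := salajanPeriod_le_add_one hq0 hq3
    have hbernoulli : 1 + b * 2 ≤ 3 ^ b := by
      exact_mod_cast one_add_mul_le_pow (a := (2 : ℤ)) (by norm_num) b
    nlinarith [Nat.mul_le_mul_right q hbernoulli, Nat.mul_le_mul hb hq0]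

lemma isPrimePow_of_discriminates {m n : ℕ} (hm : 1 < m) (h3 : Nat.Coprime 3 m)
    (hn : m < 2 * n) (h : Discriminates salajanU m n) : IsPrimePow m := by
  by_contra hpp
  have := h.le_salajanPeriod (by omega) h3
  have := two_mul_salajanPeriod_le_of_not_isPrimePow hm h3 hpp
  omega

lemma Discriminates.of_prime_pow {p a n : ℕ} (hp : p.Prime) (hp5 : 5 ≤ p)
    (h : Discriminates salajanU (p ^ (a + 1)) n) (hn : p ^ (a + 1) + 3 ≤ 2 * n) :
    Discriminates salajanU p ((p + 3) / 2) := by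
  refine iff_forall_not_modEq.mpr fun i j hi hij hj heq => ?_
  have hodd : Odd p := hp.odd_of_ne_two (by omega)
  have h3 : Nat.Coprime 3 p := (Nat.coprime_primes Nat.prime_three hp).mpr (by omega)
  have hper : salajanPeriod p ∣ p - 1 := by
    simpa only [Nat.totient_prime hp] using salajanPeriod_dvd_totient hodd (by omega) h3
  obtain ⟨s, hs⟩ : Odd (p ^ a) := hodd.pow
  have hlast : j + s * (p - 1) ≤ n := by
    obtain ⟨r, rfl⟩ := Nat.exists_eq_add_of_le' hp.one_le
    rw [pow_succ, hs] at hn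
    rw [Nat.add_sub_cancel]
    have : 2 * j ≤ r + 4 := by omega
    linarith
  rw [pow_succ'] at h
  have := h.two_mul_le_of_periodic (mul_pos hp.pos (pow_pos hp.pos a)) (periodic_salajanU hper)
    ((ZMod.intCast_eq_intCast_iff _ _ _).mpr heq) hi hij (by omega) hlast
  omega

/-! ### Primes above `5` -/

lemma salajanU_two_mul_eq_of_nine_pow {m : ℕ} (hm : Odd m) {k l : ℕ}
    (h : (9 : ZMod m) * 9 ^ k + -3 * 9 ^ l = 10) :
    (salajanU (2 * (k + 1)) : ZMod m) = salajanU (2 * l + 1) := by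
  have h9 : (3 : ZMod m) ^ 2 = 9 := by norm_num
  rw [intCast_salajanU_eq_iff hm, (even_two_mul _).neg_one_pow,
    (odd_two_mul_add_one l).neg_one_pow, pow_succ _ (2 * l), pow_mul, pow_mul, h9, pow_succ _ k]
  linear_combination h

lemma not_discriminates_of_pow_three_lt {p K : ℕ} (hp : p.Prime) (hp10 : 10 < p)
    (hK : p ^ 3 < K ^ 4) : ¬ Discriminates salajanU p (4 * K - 2) := by
  intro h
  have : Fact p.Prime := ⟨hp⟩
  have hodd : Odd p := hp.odd_of_ne_two (by omega)
  have hne : ∀ d : ℕ, 0 < d → d ≤ 10 → (d : ZMod p) ≠ 0 := fun d hd hd10 h0 => by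
    have := Nat.le_of_dvd hd ((ZMod.natCast_eq_zero_iff d p).mp h0)
    omega
  have h3 : (3 : ZMod p) ≠ 0 := by exact_mod_cast hne 3 (by norm_num) (by norm_num)
  have h9 : (9 : ZMod p) ≠ 0 := by exact_mod_cast hne 9 (by norm_num) (by norm_num)
  have h10 : (10 : ZMod p) ≠ 0 := by exact_mod_cast hne 10 (by norm_num) (by norm_num)
  have horder : K ≤ orderOf (9 : ZMod p) := by
    have hdvd : salajanPeriod p ∣ 2 * orderOf (9 : ZMod p) := by
      refine salajanPeriod_dvd_of_odd hodd (even_two_mul _) ?_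
      rw [pow_mul, show (3 : ZMod p) ^ 2 = 9 by norm_num, pow_orderOf_eq_one]
    have hpos : 0 < orderOf (9 : ZMod p) := h9.isUnit.isOfFinOrder.orderOf_pos
    have := Nat.le_of_dvd (by omega) hdvd
    have := h.le_salajanPeriod hp.pos ((Nat.coprime_primes Nat.prime_three hp).mpr (by omega))
    omega
  obtain ⟨k, l, hk, hl, hkl⟩ := exists_mul_pow_add_mul_pow_eq h9 (neg_ne_zero.mpr h3) h10 horder
    (by rwa [ZMod.card])
  have : 2 * (k + 1) = 2 * l + 1 := h ⟨by omega, by omega⟩ ⟨by omega, by omega⟩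
    (salajanU_two_mul_eq_of_nine_pow hodd hkl)
  omega

lemma not_discriminates_of_large_prime {p : ℕ} (hp : p.Prime) (hlarge : 4096 < p) :
    ¬ Discriminates salajanU p ((p + 3) / 2) := by
  have hK : p ^ 3 < ((p + 7) / 8) ^ 4 := by
    refine Nat.lt_of_mul_lt_mul_left (a := 4096) ?_
    calc 4096 * p ^ 3 < p * p ^ 3 := by gcongr
      _ = p ^ 4 := by ring
      _ ≤ (8 * ((p + 7) / 8)) ^ 4 := by gcongr; omega
      _ = 4096 * ((p + 7) / 8) ^ 4 := by ring
  exact fun h => not_discriminates_of_pow_three_lt hp (by omega) hK (h.mono (by omega))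

/-- `4 * u j + 5`, as a natural number so that large products of differences can be evaluated. -/
def salajanShift (j : ℕ) : ℕ := 3 ^ j + 10 * (j % 2)

/-- The product of the distances between the first `N` shifted terms, whose odd prime divisors are
the odd primes modulo which `u 1, …, u N` collide. -/
def salajanDistProd (N : ℕ) : ℕ :=
  ∏ j ∈ range N, ∏ i ∈ range j, Nat.dist (salajanShift (i + 1)) (salajanShift (j + 1))

lemma natCast_salajanShift (R : Type*) [CommRing R] (j : ℕ) :
    (salajanShift j : R) = 3 ^ j - 5 * (-1) ^ j + 5 := by
  rw [salajanShift]
  rcases Nat.even_or_odd j with hj | hj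
  · rw [hj.neg_one_pow, Nat.even_iff.mp hj]
    push_cast
    ring
  · rw [hj.neg_one_pow, Nat.odd_iff.mp hj]
    push_cast
    ring

lemma dvd_natDist_iff {m a b : ℕ} : m ∣ Nat.dist a b ↔ (a : ZMod m) = b := by
  rw [ZMod.natCast_eq_natCast_iff]
  rcases le_total a b with hab | hab
  · rw [Nat.dist_eq_sub_of_le hab, Nat.modEq_iff_dvd' hab]
  · rw [Nat.dist_eq_sub_of_le_right hab, Nat.ModEq.comm, Nat.modEq_iff_dvd' hab]

lemma not_discriminates_of_dvd_salajanDistProd {p N : ℕ} (hp : p.Prime) (hodd : Odd p)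
    (h : p ∣ salajanDistProd N) : ¬ Discriminates salajanU p N := by
  obtain ⟨j, hj, hdvd⟩ := (Prime.dvd_finsetProd_iff hp.prime _).mp h
  obtain ⟨i, hi, hdvd⟩ := (Prime.dvd_finsetProd_iff hp.prime _).mp hdvd
  rw [mem_range] at hi hj
  rw [dvd_natDist_iff, natCast_salajanShift, natCast_salajanShift, add_left_inj,
    ← intCast_salajanU_eq_iff hodd] at hdvd
  intro hd
  have : i + 1 = j + 1 := hd ⟨by omega, by omega⟩ ⟨by omega, by omega⟩ hdvd
  omega

-- Splitting `[lo, lo + w * c)` into `c` blocks keeps the recursion depth of kernel evaluation low.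
lemma dvd_prod_blocks {m lo w c : ℕ} (hlo : lo ≤ m) (hhi : m < lo + w * c) :
    m ∣ ∏ k ∈ range c, ∏ i ∈ range w, (lo + w * k + i) := by
  have hw : 0 < w := Nat.pos_of_ne_zero (by rintro rfl; omega)
  have hm : lo + w * ((m - lo) / w) + (m - lo) % w = m := by
    rw [add_assoc, Nat.div_add_mod]
    omega
  have hk : (m - lo) / w ∈ range c := mem_range.mpr (Nat.div_lt_of_lt_mul (by omega))
  have hi : (m - lo) % w ∈ range w := mem_range.mpr (Nat.mod_lt _ hw)
  nth_rw 1 [← hm]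
  exact (dvd_prod_of_mem (fun i => lo + w * ((m - lo) / w) + i) hi).trans
    (dvd_prod_of_mem (fun k => ∏ i ∈ range w, (lo + w * k + i)) hk)

lemma not_discriminates_of_prod_blocks_dvd {p : ℕ} (lo w c N : ℕ)
    (h : ∏ k ∈ range c, ∏ i ∈ range w, (lo + w * k + i) ∣ salajanDistProd N)
    (hp : p.Prime) (hodd : Odd p) (hlo : lo ≤ p) (hhi : p < lo + w * c) (hN : 2 * N ≤ lo + 3) :
    ¬ Discriminates salajanU p ((p + 3) / 2) := fun hd =>
  not_discriminates_of_dvd_salajanDistProd hp hodd ((dvd_prod_blocks hlo hhi).trans h)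
    (hd.mono (by omega))

lemma not_discriminates_of_small_prime {p : ℕ} (hp : p.Prime) (hp7 : 7 ≤ p) (hsmall : p ≤ 4096) :
    ¬ Discriminates salajanU p ((p + 3) / 2) := by
  have hodd : Odd p := hp.odd_of_ne_two (by omega)
  have check := not_discriminates_of_prod_blocks_dvd (p := p)
  obtain h | h | h | h | h | h | h : p < 13 ∨ 13 ≤ p ∧ p < 29 ∨ 29 ≤ p ∧ p < 58 ∨
    58 ≤ p ∧ p < 131 ∨ 131 ≤ p ∧ p < 379 ∨ 379 ≤ p ∧ p < 2459 ∨ 2459 ≤ p := by omega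
  · exact check 7 6 1 5 (by decide +kernel) hp hodd (by omega) (by omega) (by omega)
  · exact check 13 16 1 8 (by decide +kernel) hp hodd (by omega) (by omega) (by omega)
  · exact check 29 29 1 16 (by decide +kernel) hp hodd (by omega) (by omega) (by omega)
  · exact check 58 73 1 30 (by decide +kernel) hp hodd (by omega) (by omega) (by omega)
  · exact check 131 31 8 67 (by decide +kernel) hp hodd (by omega) (by omega) (by omega)
  · exact check 379 52 40 191 (by decide +kernel) hp hodd (by omega) (by omega) (by omega)
  · exact check 2459 42 39 275 (by decide +kernel) hp hodd (by omega) (by omega) (by omega)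

lemma eq_two_pow_or_eq_five_pow_of_discriminates {m n : ℕ} (hm : 0 < m) (hn : m + 3 ≤ 2 * n)
    (h : Discriminates salajanU m n) : (∃ b, m = 2 ^ b) ∨ ∃ b, m = 5 ^ (b + 1) := by
  have h3 := coprime_three_of_discriminates hm hn h
  have hnm := h.le hm
  obtain ⟨p, k, hp, hk, rfl⟩ := (isPrimePow_nat_iff m).mp
    (isPrimePow_of_discriminates (by omega) h3 (by omega) h)
  obtain ⟨a, rfl⟩ := Nat.exists_eq_succ_of_ne_zero hk.ne'
  rcases lt_or_ge p 7 with h7 | h7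
  · have := hp.two_le
    interval_cases p
    · exact .inl ⟨_, rfl⟩
    · exact absurd (dvd_pow_self 3 hk.ne') ((Nat.Prime.coprime_iff_not_dvd hp).mp h3)
    · exact absurd hp (by decide)
    · exact .inr ⟨_, rfl⟩
    · exact absurd hp (by decide)
  · have hdp := h.of_prime_pow hp (by omega) hn
    rcases le_or_gt p 4096 with hsmall | hlarge
    · exact (not_discriminates_of_small_prime hp h7 hsmall hdp).elim
    · exact (not_discriminates_of_large_prime hp hlarge hdp).elim

lemma salajanD_eq_of_discriminates {m n : ℕ} (hm : 0 < m) (h : Discriminates salajanU m n)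
    (hmin : ∀ m', 0 < m' → Discriminates salajanU m' n → m ≤ m') : salajanD n = m :=
  IsLeast.csInf_eq ⟨⟨hm, Discriminates.iff_forall_not_modEq.mp h⟩,
    fun m' hm' => hmin m' hm'.1 (Discriminates.iff_forall_not_modEq.mpr hm'.2)⟩

lemma add_three_le_two_mul_of_lt_two_pow {m n e : ℕ} (hm : 0 < m)
    (he : ∀ e' : ℕ, n ≤ 2 ^ e' → e ≤ e') (hlt : m < 2 ^ e) : m + 3 ≤ 2 * n := by
  cases e with
  | zero => omega
  | succ d =>
    have hd : 2 ^ d < n := not_le.mp fun h => (Nat.lt_succ_self d).not_ge (he d h)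
    rw [pow_succ] at hlt
    omega

/-- Salajan's conjecture: `D_S(n) = min(2^e, 5^f)` where `2^e` is the smallest power
of `2` that is `≥ n` and `5^f` is the smallest power of `5` that is `≥ 5n/4`. -/
theorem salajan_conjecture (n : ℕ) (hn : 1 ≤ n) (e f : ℕ)
    (he : n ≤ 2 ^ e ∧ ∀ e' : ℕ, n ≤ 2 ^ e' → e ≤ e')
    (hf : 5 * n ≤ 4 * 5 ^ f ∧ ∀ f' : ℕ, 5 * n ≤ 4 * 5 ^ f' → f ≤ f') :
    salajanD n = min (2 ^ e) (5 ^ f) := by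
  obtain ⟨g, rfl⟩ : ∃ g, f = g + 1 := Nat.exists_eq_succ_of_ne_zero (by rintro rfl; omega)
  have hfive : ∀ g, 5 * n ≤ 4 * 5 ^ (g + 1) ↔ Discriminates salajanU (5 ^ (g + 1)) n := fun g => by
    rw [discriminates_five_pow_iff, pow_succ]
    omega
  refine salajanD_eq_of_discriminates (by positivity) ?_ fun m hm hd => ?_
  · rcases min_choice (2 ^ e) (5 ^ (g + 1)) with h | h <;> rw [h]
    · exact (discriminates_two_pow e).mono he.1
    · exact (hfive g).mp hf.1
  · by_contra! hlt
    obtain ⟨hlt2, hlt5⟩ := lt_min_iff.mp hlt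
    rcases eq_two_pow_or_eq_five_pow_of_discriminates hm
      (add_three_le_two_mul_of_lt_two_pow hm he.2 hlt2) hd with ⟨b, rfl⟩ | ⟨b, rfl⟩
    · exact (Nat.pow_le_pow_right two_pos (he.2 b (hd.le hm))).not_gt hlt2
    · exact (Nat.pow_le_pow_right (by norm_num) (hf.2 _ ((hfive b).mpr hd))).not_gt hlt5
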